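/- For two disjoint sets of variables $(x_1,\ldots,x_k)$ and $(y_1,\ldots,y_l)$ and a partition $\Lambda$ with at most $k+l$ parts, we have $s_\Lambda(x_1,\ldots,x_k,y_1,\ldots,y_l) = \sum_{M, N} c^\Lambda_{M,N}\, s_M(x_1,\ldots,x_k)\, s_N(y_1,\ldots,y_l)$, where $M$ ranges over partitions with at most $k$ parts and $N$ over partitions with at most $l$ parts. -/

import Mathlib

/- STATEMENT 3: Splitting the variables: for disjoint sets of variables (x₁,…,x_k) and
   (y₁,…,y_l) and a partition Λ with at most k+l parts,
   s_Λ(x,y) = ∑_{M,N} c^Λ_{M,N} s_M(x) s_N(y),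
   where M ranges over partitions with at most k parts and N over partitions with at
   most l parts, and c^Λ_{M,N} are the Littlewood–Richardson coefficients (characterized
   as the structure constants of Schur function multiplication, hypotheses `hfin`, `hc`).
   We realize the k+l variables as Fin (k+l), the x's being the first k and the y's the
   last l. -/

noncomputable section
open MvPolynomial

def hCompl (N : ℕ) (S : Finset (Fin N)) (k : ℕ) : MvPolynomial (Fin N) ℚ :=
  ∑ d ∈ (Finset.Icc (fun _ => 0) (fun i => if i ∈ S then k else 0) :
      Finset (Fin N → ℕ)).filter (fun d => ∑ i, d i = k),
    ∏ i, (X i) ^ d i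

def hComplZ (N : ℕ) (S : Finset (Fin N)) (m : ℤ) : MvPolynomial (Fin N) ℚ :=
  if 0 ≤ m then hCompl N S m.toNat else 0

/-- Jacobi–Trudi Schur polynomial in the variables `Xᵢ, i ∈ S`. -/
def schurJT (N : ℕ) (S : Finset (Fin N)) {l : ℕ} (Λ : Fin l → ℕ) : MvPolynomial (Fin N) ℚ :=
  Matrix.det (Matrix.of fun i j : Fin l => hComplZ N S ((Λ i : ℤ) + (j : ℤ) - (i : ℤ)))

def IsPar (Λ : ℕ → ℕ) : Prop := Antitone Λ ∧ ∃ N, ∀ i, N ≤ i → Λ i = 0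

def parLen (Λ : ℕ → ℕ) : ℕ := sInf {N | ∀ i, N ≤ i → Λ i = 0}

/-- The Schur polynomial `s_Λ` of a partition `Λ : ℕ → ℕ` in the variables `Xᵢ, i ∈ S`. -/
def schurPS (n : ℕ) (S : Finset (Fin n)) (Λ : ℕ → ℕ) : MvPolynomial (Fin n) ℚ :=
  schurJT n S (fun i : Fin (parLen Λ) => Λ (i : ℕ))

/-! Let `s_M[G] = det (g_{M_i + j - i})` be the Jacobi–Trudi determinant of a power series `G`, and
let `a_γ = det (x_i ^ γ_j)` be the alternant of the exponents `γ`. Then `s_Λ[GH]` is the coefficient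
of `x ^ (Λ + δ)` in `∏ᵢ H(xᵢ) · ∏ᵢ G(xᵢ) · a_δ`. Expanding `∏ᵢ G(xᵢ) · a_δ = ∑_M s_M[G] a_{M + δ}`
and using the bialternant formula `a_{M + δ} = s_M a_δ`, first for `G` and then for `H`, gives
`s_Λ[GH] = ∑_{M, N} s_M[G] s_N[H] · [x ^ (Λ + δ)] (s_M s_N a_δ)`, and the bracket is `c^Λ_{M, N}`.
It remains to take for `G` and `H` the generating series of the complete homogeneous polynomials in
the two sets of variables, whose product is the one of the union; `s_M` vanishes as soon as `M` has
more parts than there are variables. -/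

section Determinants

variable {ι R : Type*} [CommRing R] {n : ℕ}

lemma exists_comp_perm_eq_of_det_one_submatrix_ne_zero [DecidableEq ι] {v γ : Fin n → ι}
    (h : ((1 : Matrix ι ι R).submatrix v γ).det ≠ 0) : ∃ σ : Equiv.Perm (Fin n), v ∘ σ = γ := by
  rw [Matrix.det_apply] at h
  obtain ⟨σ, -, hσ⟩ := Finset.exists_ne_zero_of_sum_ne_zero h
  refine ⟨σ, funext fun i => ?_⟩
  by_contra hne
  exact hσ (smul_eq_zero_of_right _
    (Finset.prod_eq_zero (Finset.mem_univ i) (Matrix.one_apply_ne hne)))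

lemma finite_det_one_submatrix_ne_zero [DecidableEq ι] (v : Fin n → ι) :
    {γ : Fin n → ι | ((1 : Matrix ι ι R).submatrix v γ).det ≠ 0}.Finite :=
  (Set.finite_range fun σ : Equiv.Perm (Fin n) => v ∘ σ).subset fun _ h =>
    exists_comp_perm_eq_of_det_one_submatrix_ne_zero h

variable [LinearOrder ι]

lemma comp_perm_eq_comp_perm_of_strictAnti {v : Fin n → ι} {σ τ : Equiv.Perm (Fin n)}
    (hσ : StrictAnti (v ∘ σ)) (hτ : StrictAnti (v ∘ τ)) : v ∘ σ = v ∘ τ :=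
  (hσ.range_inj hτ).mp (by rw [σ.surjective.range_comp, τ.surjective.range_comp])

lemma det_one_submatrix_of_strictAnti {v γ : Fin n → ι} (hv : StrictAnti v) (hγ : StrictAnti γ) :
    ((1 : Matrix ι ι R).submatrix v γ).det = if v = γ then 1 else 0 := by
  split_ifs with h
  · rw [← h, Matrix.submatrix_one v hv.injective, Matrix.det_one]
  · by_contra hne
    obtain ⟨σ, rfl⟩ := exists_comp_perm_eq_of_det_one_submatrix_ne_zero hne
    exact h (comp_perm_eq_comp_perm_of_strictAnti (σ := 1) hv hγ)

lemma exists_perm_strictAnti_comp {v : Fin n → ι} (hv : Function.Injective v) :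
    ∃ σ : Equiv.Perm (Fin n), StrictAnti (v ∘ σ) :=
  ⟨Tuple.sort (OrderDual.toDual ∘ v), Antitone.strictAnti_of_injective
    (fun _ _ hij => Tuple.monotone_sort (OrderDual.toDual ∘ v) hij)
    (hv.comp (Equiv.injective _))⟩

lemma det_submatrix_comp_perm_mul_det_one_submatrix (A : Matrix ι (Fin n) R) {v : Fin n → ι}
    (hv : Function.Injective v) (σ : Equiv.Perm (Fin n)) :
    (A.submatrix (v ∘ σ) id).det * ((1 : Matrix ι ι R).submatrix v (v ∘ σ)).det =
      (A.submatrix v id).det := by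
  have hA : (A.submatrix (v ∘ σ) id).det = Equiv.Perm.sign σ * (A.submatrix v id).det :=
    Matrix.det_permute σ (A.submatrix v id)
  have hone : ((1 : Matrix ι ι R).submatrix v (v ∘ σ)).det = Equiv.Perm.sign σ := by
    have h := Matrix.det_permute' σ ((1 : Matrix ι ι R).submatrix v v)
    rwa [Matrix.submatrix_submatrix, Matrix.submatrix_one v hv, Matrix.det_one, mul_one] at h
  have hsign : ((Equiv.Perm.sign σ : ℤ) : R) * (Equiv.Perm.sign σ : ℤ) = 1 := by
    rw [← Int.cast_mul, ← Units.val_mul, Int.units_mul_self, Units.val_one, Int.cast_one]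
  rw [hA, hone, mul_right_comm, hsign, one_mul]

lemma det_submatrix_eq_finsum_strictAnti (A : Matrix ι (Fin n) R) (v : Fin n → ι) :
    (A.submatrix v id).det = ∑ᶠ γ ∈ {γ : Fin n → ι | StrictAnti γ},
      (A.submatrix γ id).det * ((1 : Matrix ι ι R).submatrix v γ).det := by
  by_cases hv : Function.Injective v
  · obtain ⟨σ, hσ⟩ := exists_perm_strictAnti_comp hv
    rw [finsum_mem_def, finsum_eq_single _ (v ∘ σ), Set.indicator_of_mem (Set.mem_ofPred.mpr hσ),
      det_submatrix_comp_perm_mul_det_one_submatrix A hv]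
    intro γ hne
    refine Set.indicator_apply_eq_zero.mpr fun hγ => mul_eq_zero_of_right _ ?_
    by_contra h
    obtain ⟨τ, rfl⟩ := exists_comp_perm_eq_of_det_one_submatrix_ne_zero h
    exact hne (comp_perm_eq_comp_perm_of_strictAnti hγ hσ)
  · obtain ⟨i, j, hij, hne⟩ := Function.not_injective_iff.mp hv
    have hA : (A.submatrix v id).det = 0 :=
      Matrix.det_zero_of_row_eq hne (funext fun k => congrArg (A · k) hij)
    have hone (γ : Fin n → ι) : ((1 : Matrix ι ι R).submatrix v γ).det = 0 :=
      Matrix.det_zero_of_row_eq hne (funext fun k => congrArg ((1 : Matrix ι ι R) · (γ k)) hij)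
    simp only [hA, hone, mul_zero, finsum_zero]

end Determinants

section Alternants

variable {R : Type*} [CommRing R] {n : ℕ}

/-- The alternant `det (F_j(x_i))` of univariate power series `F_0, …, F_{n-1}`. -/
def alternant (F : Fin n → PowerSeries R) : MvPowerSeries (Fin n) R :=
  Matrix.det (Matrix.of fun i j => (F j).toMvPowerSeries i)

/-- The alternant `a_γ = det (x_i ^ γ_j)` of exponents `γ_0, …, γ_{n-1}`. -/
def monomialAlternant (R : Type*) [CommRing R] (γ : Fin n → ℕ) : MvPowerSeries (Fin n) R :=
  alternant fun j => PowerSeries.X ^ γ j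

lemma coeff_toMvPowerSeries {σ : Type*} [DecidableEq σ] (i : σ) (F : PowerSeries R) (β : σ →₀ ℕ) :
    MvPowerSeries.coeff β (F.toMvPowerSeries i) =
      if β = Finsupp.single i (β i) then PowerSeries.coeff (β i) F else 0 := by
  rw [PowerSeries.toMvPowerSeries_eq_subst, PowerSeries.coeff_subst_single]

lemma coeff_prod_toMvPowerSeries {σ : Type*} [Fintype σ] (F : σ → PowerSeries R) (β : σ →₀ ℕ) :
    MvPowerSeries.coeff β (∏ i, (F i).toMvPowerSeries i) = ∏ i, PowerSeries.coeff (β i) (F i) := by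
  classical
  set diag : σ →₀ σ →₀ ℕ := Finsupp.equivFunOnFinite.symm fun i => Finsupp.single i (β i)
  have hdiag (i : σ) : diag i = Finsupp.single i (β i) := rfl
  rw [MvPowerSeries.coeff_prod, Finset.sum_eq_single diag]
  · simp only [coeff_toMvPowerSeries, hdiag, Finsupp.single_eq_same, if_true]
  · intro l hl hne
    by_contra h
    have hsingle (i : σ) : l i = Finsupp.single i (l i i) := by
      by_contra hi
      exact h (Finset.prod_eq_zero (Finset.mem_univ i) (by rw [coeff_toMvPowerSeries, if_neg hi]))
    have hβ (i : σ) : l i i = β i := by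
      rw [← (Finset.mem_finsuppAntidiag.mp hl).1, Finsupp.finsetSum_apply,
        Finset.sum_eq_single i _ (by simp)]
      intro j _ hji
      rw [hsingle j, Finsupp.single_eq_of_ne hji.symm]
    exact hne (Finsupp.ext fun i => by rw [hsingle i, hβ i, hdiag])
  · intro h
    refine absurd (Finset.mem_finsuppAntidiag.mpr ⟨?_, Finset.subset_univ _⟩) h
    simp only [hdiag, Finsupp.univ_sum_single]

lemma coeff_alternant (F : Fin n → PowerSeries R) (β : Fin n →₀ ℕ) :
    MvPowerSeries.coeff β (alternant F) =
      Matrix.det (Matrix.of fun i j => PowerSeries.coeff (β i) (F j)) := by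
  simp only [alternant, ← Matrix.det_transpose (Matrix.of _), Matrix.det_apply, map_sum,
    Matrix.transpose_apply, Matrix.of_apply, ← coeff_prod_toMvPowerSeries, map_zsmul,
    Units.smul_def]

lemma prod_toMvPowerSeries_mul_alternant (G : PowerSeries R) (F : Fin n → PowerSeries R) :
    (∏ i, G.toMvPowerSeries i) * alternant F = alternant fun j => G * F j := by
  simp only [alternant, map_mul]
  exact (Matrix.det_mul_column _ _).symm

lemma coeff_monomialAlternant (v : Fin n →₀ ℕ) (γ : Fin n → ℕ) :
    MvPowerSeries.coeff v (monomialAlternant R γ) =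
      ((1 : Matrix ℕ ℕ R).submatrix v γ).det := by
  rw [monomialAlternant, coeff_alternant]
  congr 1
  ext i j
  simp only [Matrix.of_apply, PowerSeries.coeff_X_pow, Matrix.submatrix_apply, Matrix.one_apply]

lemma coeff_alternant_eq_finsum (F : Fin n → PowerSeries R) (v : Fin n →₀ ℕ) :
    MvPowerSeries.coeff v (alternant F) = ∑ᶠ γ ∈ {γ : Fin n → ℕ | StrictAnti γ},
      Matrix.det (Matrix.of fun i j => PowerSeries.coeff (γ i) (F j)) *
        MvPowerSeries.coeff v (monomialAlternant R γ) := by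
  simp only [coeff_monomialAlternant]
  rw [coeff_alternant]
  exact det_submatrix_eq_finsum_strictAnti (Matrix.of fun m j => PowerSeries.coeff m (F j)) v

lemma finite_coeff_monomialAlternant_ne_zero (v : Fin n →₀ ℕ) :
    {γ : Fin n → ℕ | MvPowerSeries.coeff v (monomialAlternant R γ) ≠ 0}.Finite := by
  simp only [coeff_monomialAlternant]
  exact finite_det_one_submatrix_ne_zero v

lemma coeff_mul_alternant (q : MvPowerSeries (Fin n) R) (F : Fin n → PowerSeries R)
    (β : Fin n →₀ ℕ) :
    MvPowerSeries.coeff β (q * alternant F) = ∑ᶠ γ ∈ {γ : Fin n → ℕ | StrictAnti γ},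
      Matrix.det (Matrix.of fun i j => PowerSeries.coeff (γ i) (F j)) *
        MvPowerSeries.coeff β (q * monomialAlternant R γ) := by
  set w : (Fin n → ℕ) → R := fun γ =>
    Matrix.det (Matrix.of fun i j => PowerSeries.coeff (γ i) (F j))
  have hfinite (w' : (Fin n → ℕ) → R) (v : Fin n →₀ ℕ) :
      (fun γ : {γ : Fin n → ℕ | StrictAnti γ} => w' γ *
        MvPowerSeries.coeff v (monomialAlternant R γ)).HasFiniteSupport :=
    ((finite_coeff_monomialAlternant_ne_zero v).preimage Subtype.val_injective.injOn).subset
      fun γ hγ => right_ne_zero_of_mul hγ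
  simp only [MvPowerSeries.coeff_mul, coeff_alternant_eq_finsum F,
    ← finsum_set_coe_eq_finsum_mem {γ : Fin n → ℕ | StrictAnti γ}, Finset.mul_sum]
  rw [finsum_sum_comm]
  · refine Finset.sum_congr rfl fun p _ => ?_
    rw [mul_finsum' _ _ (hfinite w p.2)]
    exact finsum_congr fun γ => mul_left_comm _ _ _
  · intro p _
    simpa only [mul_assoc] using hfinite (fun γ => w γ * MvPowerSeries.coeff p.1 q) p.2

end Alternants

section Partitions

variable {n : ℕ}

/-- The partitions with at most `n` parts. -/
def partitionsLE (n : ℕ) : Set (ℕ → ℕ) := {M | IsPar M ∧ parLen M ≤ n}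

lemma mem_partitionsLE {M : ℕ → ℕ} :
    M ∈ partitionsLE n ↔ Antitone M ∧ ∀ i, n ≤ i → M i = 0 :=
  ⟨fun h => ⟨h.1.1, fun i hi => Nat.sInf_mem h.1.2 i (h.2.trans hi)⟩,
    fun h => ⟨⟨h.1, n, h.2⟩, Nat.sInf_le h.2⟩⟩

/-- The strictly decreasing exponents `Λ_i + (n - 1 - i)` attached to a partition `Λ` with at most
`n` parts, i.e. `Λ + δ` with `δ = (n - 1, …, 1, 0)`. -/
def shiftedParts (n : ℕ) (Λ : ℕ → ℕ) : Fin n → ℕ := fun i => Λ i + (i.rev : ℕ)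

lemma strictAnti_shiftedParts {Λ : ℕ → ℕ} (hΛ : Antitone Λ) : StrictAnti (shiftedParts n Λ) :=
  fun _ _ hij => add_lt_add_of_le_of_lt (hΛ hij.le) (Fin.rev_lt_rev.mpr hij)

lemma injOn_shiftedParts : Set.InjOn (shiftedParts n) (partitionsLE n) := by
  intro M hM N hN h
  funext i
  by_cases hi : i < n
  · exact add_right_cancel (congrFun h ⟨i, hi⟩)
  · rw [(mem_partitionsLE.mp hM).2 i (not_lt.mp hi), (mem_partitionsLE.mp hN).2 i (not_lt.mp hi)]

lemma rev_le_of_strictAnti {γ : Fin n → ℕ} (hγ : StrictAnti γ) (i : Fin n) :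
    (i.rev : ℕ) ≤ γ i := by
  have hcard : (Finset.Ioi i).card ≤ (Finset.range (γ i)).card :=
    Finset.card_le_card_of_injOn γ
      (fun j hj => Finset.mem_coe.mpr (Finset.mem_range.mpr (hγ (Finset.mem_Ioi.mp hj))))
      hγ.injective.injOn
  rw [Fin.card_Ioi, Finset.card_range] at hcard
  rw [Fin.val_rev]
  omega

lemma exists_shiftedParts_eq {γ : Fin n → ℕ} (hγ : StrictAnti γ) :
    ∃ M ∈ partitionsLE n, shiftedParts n M = γ := by
  refine ⟨fun i => if h : i < n then γ ⟨i, h⟩ - (Fin.rev ⟨i, h⟩ : ℕ) else 0,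
    mem_partitionsLE.mpr ⟨antitone_nat_of_succ_le fun i => ?_, fun i hi => dif_neg hi.not_gt⟩,
    funext fun i => ?_⟩
  · by_cases hi : i + 1 < n
    · have hlt : γ ⟨i + 1, hi⟩ < γ ⟨i, Nat.lt_of_succ_lt hi⟩ := hγ (Fin.mk_lt_mk.mpr i.lt_succ_self)
      simp only [dif_pos hi, dif_pos (Nat.lt_of_succ_lt hi), Fin.val_rev]
      omega
    · rw [dif_neg hi]
      exact Nat.zero_le _
  · simp only [shiftedParts, Fin.is_lt, dif_pos, Fin.eta]
    exact Nat.sub_add_cancel (rev_le_of_strictAnti hγ i)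

lemma bijOn_shiftedParts :
    Set.BijOn (shiftedParts n) (partitionsLE n) {γ : Fin n → ℕ | StrictAnti γ} :=
  ⟨fun _ hM => strictAnti_shiftedParts hM.1.1, injOn_shiftedParts,
    fun _ hγ => exists_shiftedParts_eq hγ⟩

end Partitions

section JacobiTrudi

variable {R : Type*} [CommRing R] {G : PowerSeries R} {n : ℕ} {Λ : ℕ → ℕ}

/-- The Jacobi–Trudi determinant `det (g_{Λ_i + j - i})` of size `n` in the coefficients `g_m` of
a power series `G`, where `g_m = 0` for `m < 0`. -/
def jacobiTrudi (G : PowerSeries R) (n : ℕ) (Λ : ℕ → ℕ) : R :=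
  Matrix.det (Matrix.of fun i j : Fin n =>
    PowerSeries.coeff (shiftedParts n Λ i) (PowerSeries.X ^ (j.rev : ℕ) * G))

lemma map_jacobiTrudi {A : Type*} [CommRing A] (f : R →+* A) (G : PowerSeries R) (n : ℕ)
    (Λ : ℕ → ℕ) : f (jacobiTrudi G n Λ) = jacobiTrudi (PowerSeries.map f G) n Λ := by
  rw [jacobiTrudi, RingHom.map_det, jacobiTrudi]
  congr 1
  ext i j
  simp only [RingHom.mapMatrix_apply, Matrix.map_apply, Matrix.of_apply, ← PowerSeries.coeff_map,
    map_mul, map_pow, PowerSeries.map_X]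

lemma jacobiTrudi_succ (hG : PowerSeries.constantCoeff G = 1) (hΛ : Λ n = 0) :
    jacobiTrudi G (n + 1) Λ = jacobiTrudi G n Λ := by
  have hlast : shiftedParts (n + 1) Λ (Fin.last n) = 0 := by
    rw [shiftedParts, Fin.val_last, hΛ, Fin.rev_last, Fin.val_zero]
  have hcastSucc (i : Fin n) :
      shiftedParts (n + 1) Λ i.castSucc = shiftedParts n Λ i + 1 := by
    rw [shiftedParts, Fin.rev_castSucc, Fin.val_succ, Fin.val_castSucc, shiftedParts, add_assoc]
  rw [jacobiTrudi, Matrix.det_succ_row _ (Fin.last n), Finset.sum_eq_single (Fin.last n)]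
  · simp only [Matrix.of_apply, hlast, Fin.rev_last, Fin.val_zero, pow_zero, one_mul,
      PowerSeries.coeff_zero_eq_constantCoeff_apply, hG, mul_one, (Even.add_self n).neg_one_pow,
      Fin.val_last, Fin.succAbove_last]
    rw [jacobiTrudi]
    congr 1
    ext i j
    rw [Matrix.submatrix_apply, Matrix.of_apply, Matrix.of_apply, hcastSucc, Fin.rev_castSucc,
      Fin.val_succ, pow_succ', mul_assoc, PowerSeries.coeff_succ_X_mul]
  · intro j _ hj
    obtain ⟨j, rfl⟩ := Fin.exists_castSucc_eq.mpr hj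
    rw [Matrix.of_apply, hlast, Fin.rev_castSucc, Fin.val_succ, pow_succ', mul_assoc PowerSeries.X,
      PowerSeries.coeff_zero_X_mul, mul_zero, zero_mul]
  · exact fun h => absurd (Finset.mem_univ _) h

lemma jacobiTrudi_eq_of_le (hG : PowerSeries.constantCoeff G = 1) {r : ℕ} (hrn : r ≤ n)
    (hΛ : ∀ i, r ≤ i → Λ i = 0) : jacobiTrudi G n Λ = jacobiTrudi G r Λ := by
  induction n, hrn using Nat.le_induction with
  | base => rfl
  | succ n hrn ih => rw [jacobiTrudi_succ hG (hΛ n hrn), ih]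

lemma jacobiTrudi_zero (hG : PowerSeries.constantCoeff G = 1) (n : ℕ) :
    jacobiTrudi G n 0 = 1 := by
  rw [jacobiTrudi_eq_of_le hG n.zero_le (fun _ _ => Pi.zero_apply _), jacobiTrudi,
    Matrix.det_fin_zero]

lemma sum_coeff_X_pow_rev_mul {p : Polynomial R} (hp : p.natDegree < n) (G : PowerSeries R)
    (m : ℕ) :
    ∑ j : Fin n, PowerSeries.coeff m (PowerSeries.X ^ (j.rev : ℕ) * G) * p.coeff (j.rev : ℕ) =
      PowerSeries.coeff m (p * G : PowerSeries R) := by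
  have hsum : (p : PowerSeries R) =
      ∑ t : Fin n, PowerSeries.C (p.coeff t) * PowerSeries.X ^ (t : ℕ) := by
    conv_lhs => rw [p.as_sum_range_C_mul_X_pow' hp]
    rw [Fin.sum_univ_eq_sum_range (fun t => PowerSeries.C (p.coeff t) * PowerSeries.X ^ t),
      ← Polynomial.coeToPowerSeries.ringHom_apply, map_sum]
    simp
  rw [hsum, Finset.sum_mul, map_sum]
  refine Fintype.sum_equiv Fin.revPerm _ _ fun j => ?_
  rw [mul_assoc, PowerSeries.coeff_C_mul, mul_comm, Fin.revPerm_apply]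

lemma jacobiTrudi_eq_zero {p : Polynomial R} (hpG : (p * G : PowerSeries R) = 1)
    (hp : p.natDegree < n) (hΛ : ∀ i < n, 0 < Λ i) : jacobiTrudi G n Λ = 0 := by
  set A : Matrix (Fin n) (Fin n) R := Matrix.of fun i j =>
    PowerSeries.coeff (shiftedParts n Λ i) (PowerSeries.X ^ (j.rev : ℕ) * G)
  have hn : 0 < n := (Nat.zero_le _).trans_lt hp
  -- Each row of `A` is a segment of the coefficient sequence of `G`, which past index `0` is
  -- annihilated by the recurrence `p * G = 1`.
  have hker : A.mulVec (fun j => p.coeff j.rev) = 0 := by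
    funext i
    have hi : shiftedParts n Λ i ≠ 0 := (Nat.add_pos_left (hΛ i i.2) _).ne'
    rw [Pi.zero_apply, Matrix.mulVec, dotProduct]
    simp only [A, Matrix.of_apply]
    rw [sum_coeff_X_pow_rev_mul hp, hpG, PowerSeries.coeff_one, if_neg hi]
  have hdet : A.det * p.coeff 0 = 0 := by
    have h : A.det • (fun j : Fin n => p.coeff j.rev) = 0 := by
      rw [← Matrix.one_mulVec (fun j : Fin n => p.coeff j.rev), ← Matrix.smul_mulVec,
        ← Matrix.adjugate_mul, ← Matrix.mulVec_mulVec, hker, Matrix.mulVec_zero]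
    simpa [Fin.val_rev, Nat.sub_add_cancel hn] using congrFun h (Fin.rev ⟨0, hn⟩)
  have hconst : p.coeff 0 * PowerSeries.constantCoeff G = 1 := by
    simpa using congrArg PowerSeries.constantCoeff hpG
  calc A.det = A.det * p.coeff 0 * PowerSeries.constantCoeff G := by
        rw [mul_assoc, hconst, mul_one]
    _ = 0 := by rw [hdet, zero_mul]

end JacobiTrudi

section CompleteHomogeneous

variable {ι A : Type*} [CommRing A]

/-- The generating series `∏_{i ∈ s} 1 / (1 - x_i t)` of the complete homogeneous symmetric
polynomials in the `x_i`. -/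
def complSeries (x : ι → A) (s : Finset ι) : PowerSeries A :=
  ∏ i ∈ s, PowerSeries.mk (x i ^ ·)

/-- The polynomial `∏_{i ∈ s} (1 - x_i t)`, whose coefficients are up to sign the elementary
symmetric polynomials in the `x_i`. -/
def elemPoly (x : ι → A) (s : Finset ι) : Polynomial A :=
  ∏ i ∈ s, (1 - Polynomial.C (x i) * Polynomial.X)

lemma constantCoeff_complSeries (x : ι → A) (s : Finset ι) :
    PowerSeries.constantCoeff (complSeries x s) = 1 := by
  rw [complSeries, map_prod]
  exact Finset.prod_eq_one fun i _ => by
    rw [← PowerSeries.coeff_zero_eq_constantCoeff_apply, PowerSeries.coeff_mk, pow_zero]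

lemma map_complSeries {B : Type*} [CommRing B] (f : A →+* B) (x : ι → A) (s : Finset ι) :
    PowerSeries.map f (complSeries x s) = complSeries (fun i => f (x i)) s := by
  rw [complSeries, map_prod, complSeries]
  refine Finset.prod_congr rfl fun i _ => PowerSeries.ext fun m => ?_
  rw [PowerSeries.coeff_map, PowerSeries.coeff_mk, PowerSeries.coeff_mk, map_pow]

lemma one_sub_C_mul_X_mul_mk_pow (a : A) :
    (1 - PowerSeries.C a * PowerSeries.X) * PowerSeries.mk (a ^ ·) = 1 := by
  have h := congrArg (PowerSeries.rescale a) (PowerSeries.mk_one_mul_one_sub_eq_one A)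
  rw [map_mul, map_sub, map_one, PowerSeries.rescale_X, PowerSeries.rescale_mk, mul_comm] at h
  simpa only [Pi.one_apply, mul_one] using h

lemma elemPoly_mul_complSeries (x : ι → A) (s : Finset ι) :
    (elemPoly x s * complSeries x s : PowerSeries A) = 1 := by
  rw [elemPoly, ← Polynomial.coeToPowerSeries.ringHom_apply, map_prod, complSeries,
    ← Finset.prod_mul_distrib]
  refine Finset.prod_eq_one fun i _ => ?_
  simpa using one_sub_C_mul_X_mul_mk_pow (x i)

lemma elemPoly_erase_mul_complSeries [DecidableEq ι] (x : ι → A) {s : Finset ι} {k : ι}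
    (hk : k ∈ s) :
    (elemPoly x (s.erase k) * complSeries x s : PowerSeries A) = PowerSeries.mk (x k ^ ·) := by
  have hs : complSeries x s = PowerSeries.mk (x k ^ ·) * complSeries x (s.erase k) :=
    (Finset.mul_prod_erase s _ hk).symm
  rw [hs, mul_left_comm, elemPoly_mul_complSeries, mul_one]

lemma natDegree_elemPoly_le (x : ι → A) (s : Finset ι) : (elemPoly x s).natDegree ≤ s.card := by
  calc (elemPoly x s).natDegree
      ≤ ∑ i ∈ s, Polynomial.natDegree (1 - Polynomial.C (x i) * Polynomial.X) :=
        Polynomial.natDegree_prod_le _ _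
    _ ≤ s.card • 1 := Finset.sum_le_card_nsmul _ _ 1 fun i _ => by compute_degree
    _ = s.card := nsmul_one _

lemma jacobiTrudi_complSeries_eq_zero (x : ι → A) {s : Finset ι} {n : ℕ} {Λ : ℕ → ℕ}
    (hs : s.card < n) (hΛ : ∀ i < n, 0 < Λ i) : jacobiTrudi (complSeries x s) n Λ = 0 :=
  jacobiTrudi_eq_zero (elemPoly_mul_complSeries x s) ((natDegree_elemPoly_le x s).trans_lt hs) hΛ

lemma jacobiTrudi_complSeries_mul_det {n : ℕ} (x : Fin n → A) (Λ : ℕ → ℕ) :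
    jacobiTrudi (complSeries x Finset.univ) n Λ *
        Matrix.det (Matrix.of fun i j : Fin n => x i ^ (j.rev : ℕ)) =
      Matrix.det (Matrix.of fun i j : Fin n => x i ^ shiftedParts n Λ j) := by
  set E : Matrix (Fin n) (Fin n) A :=
    Matrix.of fun j k => (elemPoly x (Finset.univ.erase k)).coeff (j.rev : ℕ)
  have hfactor (M : ℕ → ℕ) : Matrix.det (Matrix.of fun i j : Fin n => x i ^ shiftedParts n M j) =
      jacobiTrudi (complSeries x Finset.univ) n M * E.det := by
    rw [← Matrix.det_transpose, jacobiTrudi, ← Matrix.det_mul]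
    congr 1
    ext i k
    have hdeg : (elemPoly x (Finset.univ.erase k)).natDegree < n :=
      (natDegree_elemPoly_le x _).trans_lt
        ((Finset.card_erase_lt_of_mem (Finset.mem_univ k)).trans_eq (Finset.card_fin n))
    simp only [E, Matrix.mul_apply, Matrix.transpose_apply, Matrix.of_apply]
    rw [sum_coeff_X_pow_rev_mul hdeg, elemPoly_erase_mul_complSeries x (Finset.mem_univ k),
      PowerSeries.coeff_mk]
  have hδ : (fun j : Fin n => (j.rev : ℕ)) = shiftedParts n 0 :=
    funext fun j => (zero_add _).symm
  simp only [congrFun hδ, hfactor, jacobiTrudi_zero (constantCoeff_complSeries x _), one_mul]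

end CompleteHomogeneous

section SchurPolynomials

variable {n : ℕ}

lemma mem_filter_Icc_iff_mem_finsuppAntidiag {S : Finset (Fin n)} {k : ℕ} {d : Fin n →₀ ℕ} :
    (⇑d ∈ (Finset.Icc (fun _ => 0) (fun i => if i ∈ S then k else 0)).filter
      fun d : Fin n → ℕ => ∑ i, d i = k) ↔ d ∈ S.finsuppAntidiag k := by
  have hsum (h : d.support ⊆ S) : ∑ i ∈ S, d i = ∑ i, d i :=
    Finset.sum_subset S.subset_univ fun i _ hi => Finsupp.notMem_support_iff.mp (mt (@h i) hi)
  rw [Finset.mem_filter, Finset.mem_Icc, Finset.mem_finsuppAntidiag]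
  constructor
  · rintro ⟨⟨-, hle⟩, hk⟩
    have hsupp : d.support ⊆ S := fun i hi => by
      by_contra hiS
      exact Finsupp.mem_support_iff.mp hi (Nat.le_zero.mp ((hle i).trans_eq (if_neg hiS)))
    exact ⟨(hsum hsupp).trans hk, hsupp⟩
  · rintro ⟨hk, hsupp⟩
    refine ⟨⟨fun _ => Nat.zero_le _, fun i => ?_⟩, (hsum hsupp).symm.trans hk⟩
    dsimp only
    split_ifs with hi
    · exact (Finset.single_le_sum (fun _ _ => Nat.zero_le _) hi).trans_eq hk
    · exact (Finsupp.notMem_support_iff.mp (mt (@hsupp i) hi)).le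

lemma hCompl_eq_coeff_complSeries (S : Finset (Fin n)) (k : ℕ) :
    hCompl n S k = PowerSeries.coeff k (complSeries X S) := by
  rw [complSeries, PowerSeries.coeff_prod, hCompl]
  refine (Finset.sum_equiv Finsupp.equivFunOnFinite
    (fun d => mem_filter_Icc_iff_mem_finsuppAntidiag.symm) fun d hd => ?_).symm
  simp only [PowerSeries.coeff_mk, Finsupp.equivFunOnFinite_apply]
  refine Finset.prod_subset S.subset_univ fun i _ hi => ?_
  rw [Finsupp.notMem_support_iff.mp (mt (@(Finset.mem_finsuppAntidiag.mp hd).2 i) hi), pow_zero]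

lemma schurPS_eq_jacobiTrudi_parLen (S : Finset (Fin n)) (Λ : ℕ → ℕ) :
    schurPS n S Λ = jacobiTrudi (complSeries X S) (parLen Λ) Λ := by
  rw [schurPS, schurJT, jacobiTrudi]
  congr 1
  ext1 i j
  rw [Matrix.of_apply, Matrix.of_apply, hComplZ, PowerSeries.coeff_X_pow_mul',
    hCompl_eq_coeff_complSeries, shiftedParts, Fin.val_rev, Fin.val_rev]
  congr 1
  · simp only [eq_iff_iff]
    omega
  · congr 2
    omega

lemma schurPS_eq_jacobiTrudi (S : Finset (Fin n)) {Λ : ℕ → ℕ} {r : ℕ} (hΛ : Λ ∈ partitionsLE r) :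
    schurPS n S Λ = jacobiTrudi (complSeries X S) r Λ := by
  rw [schurPS_eq_jacobiTrudi_parLen, jacobiTrudi_eq_of_le (constantCoeff_complSeries X S) hΛ.2
    (mem_partitionsLE.mp ⟨hΛ.1, le_rfl⟩).2]

lemma parts_pos_of_lt_parLen {Λ : ℕ → ℕ} (hΛ : Antitone Λ) {i : ℕ} (hi : i < parLen Λ) :
    0 < Λ i := by
  by_contra h
  exact Nat.notMem_of_lt_sInf hi fun j hj => Nat.le_zero.mp ((hΛ hj).trans (not_lt.mp h))

lemma schurPS_eq_zero {S : Finset (Fin n)} {Λ : ℕ → ℕ} (hΛ : Antitone Λ)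
    (h : S.card < parLen Λ) : schurPS n S Λ = 0 := by
  rw [schurPS_eq_jacobiTrudi_parLen]
  exact jacobiTrudi_complSeries_eq_zero X h fun i hi => parts_pos_of_lt_parLen hΛ hi

end SchurPolynomials

section Bialternants

variable {R : Type*} [CommRing R] {n : ℕ}

/-- The Weyl denominator `a_δ = det (x_i ^ (n - 1 - j))`. -/
def weylDenominator (R : Type*) [CommRing R] (n : ℕ) : MvPowerSeries (Fin n) R :=
  monomialAlternant R fun j => (j.rev : ℕ)

open Classical in
lemma coeff_monomialAlternant_shiftedParts {Λ M : ℕ → ℕ} (hΛ : Λ ∈ partitionsLE n)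
    (hM : M ∈ partitionsLE n) :
    MvPowerSeries.coeff (Finsupp.equivFunOnFinite.symm (shiftedParts n Λ))
      (monomialAlternant R (shiftedParts n M)) = if M = Λ then 1 else 0 := by
  rw [coeff_monomialAlternant, Finsupp.coe_equivFunOnFinite_symm,
    det_one_submatrix_of_strictAnti (strictAnti_shiftedParts hΛ.1.1)
      (strictAnti_shiftedParts hM.1.1)]
  simp only [injOn_shiftedParts.eq_iff hΛ hM, eq_comm]

lemma coeff_mul_alternant_X_pow_rev_mul (q : MvPowerSeries (Fin n) R) (G : PowerSeries R)
    (β : Fin n →₀ ℕ) :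
    MvPowerSeries.coeff β (q * alternant fun j => PowerSeries.X ^ (j.rev : ℕ) * G) =
      ∑ᶠ M ∈ partitionsLE n, jacobiTrudi G n M *
        MvPowerSeries.coeff β (q * monomialAlternant R (shiftedParts n M)) := by
  rw [coeff_mul_alternant]
  exact (finsum_mem_eq_of_bijOn _ bijOn_shiftedParts fun M _ => rfl).symm

lemma alternant_X_pow_rev_mul (G : PowerSeries R) :
    (alternant fun j : Fin n => PowerSeries.X ^ (j.rev : ℕ) * G) =
      (∏ i, G.toMvPowerSeries i) * weylDenominator R n := by
  simp only [weylDenominator, monomialAlternant, prod_toMvPowerSeries_mul_alternant, mul_comm G]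

variable [Algebra ℚ R]

lemma aeval_schurPS_mul_weylDenominator {M : ℕ → ℕ} (hM : M ∈ partitionsLE n) :
    aeval (MvPowerSeries.X : Fin n → MvPowerSeries (Fin n) R) (schurPS n Finset.univ M) *
      weylDenominator R n = monomialAlternant R (shiftedParts n M) := by
  have hmap : aeval (MvPowerSeries.X : Fin n → MvPowerSeries (Fin n) R)
      (schurPS n Finset.univ M) =
      jacobiTrudi (complSeries MvPowerSeries.X Finset.univ) n M := by
    rw [schurPS_eq_jacobiTrudi _ hM, ← AlgHom.coe_toRingHom, map_jacobiTrudi, map_complSeries]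
    simp only [AlgHom.coe_toRingHom, aeval_X]
  rw [hmap, weylDenominator]
  simp only [monomialAlternant, alternant, map_pow, PowerSeries.toMvPowerSeries_X,
    jacobiTrudi_complSeries_mul_det]

/-- The linear functional extracting the coefficient of the Schur polynomial `s_Λ`: by the
bialternant formula it is the coefficient of `x ^ (Λ + δ)` after multiplication by `a_δ`. -/
def schurCoeff (R : Type*) [CommRing R] [Algebra ℚ R] (n : ℕ) (Λ : ℕ → ℕ) :
    MvPolynomial (Fin n) ℚ →ₗ[ℚ] R :=
  (MvPowerSeries.coeff (Finsupp.equivFunOnFinite.symm (shiftedParts n Λ))).restrictScalars ℚ ∘ₗ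
    LinearMap.mulRight ℚ (weylDenominator R n) ∘ₗ (aeval MvPowerSeries.X).toLinearMap

lemma schurCoeff_apply (Λ : ℕ → ℕ) (f : MvPolynomial (Fin n) ℚ) :
    schurCoeff R n Λ f = MvPowerSeries.coeff (Finsupp.equivFunOnFinite.symm (shiftedParts n Λ))
      (aeval MvPowerSeries.X f * weylDenominator R n) :=
  rfl

open Classical in
lemma schurCoeff_schurPS {Λ M : ℕ → ℕ} (hΛ : Λ ∈ partitionsLE n) (hM : IsPar M) :
    schurCoeff R n Λ (schurPS n Finset.univ M) = if M = Λ then 1 else 0 := by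
  by_cases hMn : parLen M ≤ n
  · rw [schurCoeff_apply, aeval_schurPS_mul_weylDenominator ⟨hM, hMn⟩,
      coeff_monomialAlternant_shiftedParts hΛ ⟨hM, hMn⟩]
  · rw [schurPS_eq_zero hM.1 (by rwa [Finset.card_fin, ← not_le]), map_zero, if_neg]
    rintro rfl
    exact hMn hΛ.2

lemma schurPS_univ_ne_zero {M : ℕ → ℕ} (hM : M ∈ partitionsLE n) :
    schurPS n Finset.univ M ≠ 0 := by
  intro h
  simpa only [h, map_zero, if_true, zero_ne_one] using schurCoeff_schurPS (R := ℚ) hM hM.1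

lemma schurCoeff_mul_eq {c : (ℕ → ℕ) → ℚ} {M N Λ : ℕ → ℕ} (hM : M ∈ partitionsLE n)
    (hN : N ∈ partitionsLE n) (hΛ : Λ ∈ partitionsLE n)
    (hc : schurPS n Finset.univ M * schurPS n Finset.univ N =
      ∑ᶠ Λ ∈ {Λ : ℕ → ℕ | IsPar Λ}, c Λ • schurPS n Finset.univ Λ) :
    schurCoeff R n Λ (schurPS n Finset.univ M * schurPS n Finset.univ N) =
      algebraMap ℚ R (c Λ) := by
  classical
  have hfinite : ({Λ : ℕ → ℕ | IsPar Λ} ∩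
      Function.support fun Λ => c Λ • schurPS n Finset.univ Λ).Finite := by
    by_contra hinf
    rw [finsum_mem_eq_zero_of_infinite hinf] at hc
    exact mul_ne_zero (schurPS_univ_ne_zero hM) (schurPS_univ_ne_zero hN) hc
  have hterm (M' : ℕ → ℕ) (hM' : M' ∈ {Λ : ℕ → ℕ | IsPar Λ}) :
      schurCoeff R n Λ (c M' • schurPS n Finset.univ M') =
        if M' = Λ then algebraMap ℚ R (c Λ) else 0 := by
    rw [map_smul, schurCoeff_schurPS hΛ hM']
    split_ifs with h
    · rw [h, Algebra.algebraMap_eq_smul_one]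
    · rw [smul_zero]
  rw [hc, ← LinearMap.toAddMonoidHom_coe, AddMonoidHom.map_finsum_mem' _ hfinite]
  rw [LinearMap.toAddMonoidHom_coe, finsum_mem_congr rfl hterm, finsum_mem_def,
    finsum_eq_single _ Λ, Set.indicator_of_mem (Set.mem_ofPred.mpr hΛ.1), if_pos rfl]
  exact fun M' hne => Set.indicator_apply_eq_zero.mpr fun _ => if_neg hne

lemma jacobiTrudi_mul (G H : PowerSeries R) (Λ : ℕ → ℕ) :
    jacobiTrudi (G * H) n Λ = ∑ᶠ M ∈ partitionsLE n, jacobiTrudi G n M *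
      ∑ᶠ N ∈ partitionsLE n, jacobiTrudi H n N *
        schurCoeff R n Λ (schurPS n Finset.univ M * schurPS n Finset.univ N) := by
  set β : Fin n →₀ ℕ := Finsupp.equivFunOnFinite.symm (shiftedParts n Λ)
  set s : (ℕ → ℕ) → MvPowerSeries (Fin n) R := fun M =>
    aeval MvPowerSeries.X (schurPS n Finset.univ M)
  have hkernel : (∏ i, (G * H).toMvPowerSeries i) = (∏ i, H.toMvPowerSeries i) *
      ∏ i : Fin n, G.toMvPowerSeries i := by
    simp only [map_mul, Finset.prod_mul_distrib, mul_comm]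
  calc jacobiTrudi (G * H) n Λ
      = MvPowerSeries.coeff β (alternant fun j => PowerSeries.X ^ (j.rev : ℕ) * (G * H)) :=
        (coeff_alternant _ β).symm
    _ = MvPowerSeries.coeff β ((∏ i, H.toMvPowerSeries i) *
          alternant fun j => PowerSeries.X ^ (j.rev : ℕ) * G) := by
        rw [alternant_X_pow_rev_mul, alternant_X_pow_rev_mul, hkernel, mul_assoc]
    _ = ∑ᶠ M ∈ partitionsLE n, jacobiTrudi G n M * MvPowerSeries.coeff β
          (s M * alternant fun j => PowerSeries.X ^ (j.rev : ℕ) * H) := by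
        rw [coeff_mul_alternant_X_pow_rev_mul]
        refine finsum_mem_congr rfl fun M hM => ?_
        rw [alternant_X_pow_rev_mul, mul_left_comm (s M), aeval_schurPS_mul_weylDenominator hM]
    _ = _ := by
        refine finsum_mem_congr rfl fun M _ => ?_
        rw [coeff_mul_alternant_X_pow_rev_mul]
        congr 1
        refine finsum_mem_congr rfl fun N hN => ?_
        rw [schurCoeff_apply, map_mul (aeval _), mul_assoc, aeval_schurPS_mul_weylDenominator hN]

end Bialternants

lemma filter_le_val_eq_compl (k l : ℕ) :
    (Finset.univ.filter fun i : Fin (k + l) => k ≤ (i : ℕ)) =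
      (Finset.univ.filter fun i : Fin (k + l) => (i : ℕ) < k)ᶜ := by
  ext i
  simp

lemma card_filter_val_lt_add (k l : ℕ) :
    (Finset.univ.filter fun i : Fin (k + l) => (i : ℕ) < k).card = k := by
  rw [Fin.card_filter_val_lt, min_eq_right (Nat.le_add_right k l)]

lemma card_filter_le_val (k l : ℕ) :
    (Finset.univ.filter fun i : Fin (k + l) => k ≤ (i : ℕ)).card = l := by
  rw [filter_le_val_eq_compl, Finset.card_compl, Fintype.card_fin, card_filter_val_lt_add,
    Nat.add_sub_cancel_left]

theorem stmt3_general {n : ℕ} {c : (ℕ → ℕ) → (ℕ → ℕ) → (ℕ → ℕ) → ℚ}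
    (hc : ∀ M ∈ partitionsLE n, ∀ N ∈ partitionsLE n,
      schurPS n Finset.univ M * schurPS n Finset.univ N =
        ∑ᶠ Λ ∈ {Λ : ℕ → ℕ | IsPar Λ}, c Λ M N • schurPS n Finset.univ Λ)
    {S T : Finset (Fin n)} (hST : Disjoint S T) {Λ : ℕ → ℕ} (hΛ : Λ ∈ partitionsLE n) :
    schurPS n (S ∪ T) Λ = ∑ᶠ M ∈ partitionsLE S.card, ∑ᶠ N ∈ partitionsLE T.card,
      c Λ M N • (schurPS n S M * schurPS n T N) := by
  have hshrink (U : Finset (Fin n)) (f : (ℕ → ℕ) → MvPolynomial (Fin n) ℚ) :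
      ∑ᶠ M ∈ partitionsLE n, schurPS n U M * f M =
        ∑ᶠ M ∈ partitionsLE U.card, schurPS n U M * f M := by
    refine finsum_mem_inter_support_eq' _ _ _ fun M hM => ⟨fun h => ⟨h.1, ?_⟩,
      fun h => ⟨h.1, h.2.trans (card_finset_fin_le U)⟩⟩
    by_contra hlt
    exact left_ne_zero_of_mul hM (schurPS_eq_zero h.1.1 (not_le.mp hlt))
  calc schurPS n (S ∪ T) Λ
      = jacobiTrudi (complSeries X S * complSeries X T) n Λ := by
        rw [schurPS_eq_jacobiTrudi _ hΛ, complSeries, Finset.prod_union hST, complSeries,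
          complSeries]
    _ = ∑ᶠ M ∈ partitionsLE n, schurPS n S M * ∑ᶠ N ∈ partitionsLE n,
          schurPS n T N * algebraMap ℚ _ (c Λ M N) := by
        rw [jacobiTrudi_mul]
        refine finsum_mem_congr rfl fun M hM => ?_
        rw [schurPS_eq_jacobiTrudi S hM]
        congr 1
        refine finsum_mem_congr rfl fun N hN => ?_
        rw [schurPS_eq_jacobiTrudi T hN, schurCoeff_mul_eq hM hN hΛ (hc M hM N hN)]
    _ = _ := by
        simp only [hshrink]
        refine finsum_mem_congr rfl fun M _ => ?_
        rw [mul_finsum_mem]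
        refine finsum_mem_congr rfl fun N _ => ?_
        rw [Algebra.smul_def]
        ring

theorem stmt3 (c : (ℕ → ℕ) → (ℕ → ℕ) → (ℕ → ℕ) → ℕ)
    (hfin : ∀ M N : ℕ → ℕ, {Λ : ℕ → ℕ | IsPar Λ ∧ c Λ M N ≠ 0}.Finite)
    (hc : ∀ M N : ℕ → ℕ, IsPar M → IsPar N → ∀ n : ℕ,
      schurPS n Finset.univ M * schurPS n Finset.univ N =
        ∑ᶠ Λ ∈ {Λ : ℕ → ℕ | IsPar Λ}, (c Λ M N : ℚ) • schurPS n Finset.univ Λ) :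
    ∀ k l : ℕ, ∀ Λ : ℕ → ℕ, IsPar Λ → parLen Λ ≤ k + l →
      schurPS (k + l) Finset.univ Λ =
        ∑ᶠ M ∈ {M : ℕ → ℕ | IsPar M ∧ parLen M ≤ k},
          ∑ᶠ N ∈ {N : ℕ → ℕ | IsPar N ∧ parLen N ≤ l},
            (c Λ M N : ℚ) •
              (schurPS (k + l) (Finset.univ.filter fun i : Fin (k + l) => (i : ℕ) < k) M *
                schurPS (k + l) (Finset.univ.filter fun i : Fin (k + l) => k ≤ (i : ℕ)) N) := by
  intro k l Λ hΛ hΛn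
  have h := stmt3_general (fun M hM N hN => hc M N hM.1 hN.1 (k + l))
    (disjoint_compl_right (a := Finset.univ.filter fun i : Fin (k + l) => (i : ℕ) < k)) ⟨hΛ, hΛn⟩
  rwa [Finset.union_compl, ← filter_le_val_eq_compl, card_filter_val_lt_add,
    card_filter_le_val] at h

end
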